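/- Let λ=(λ_1,...,λ_l) be a partition, (w_l,...,w_1) = (λ_1,...,λ_l)+(l−1,...,1,0) the corresponding strictly decreasing sequence (so w_i = λ_{l+1−i}+i−1), and 0 ≤ k ≤ l. Then ∂_1^{N_{λ,k}} s_λ(t), evaluated at t = [x_1]+⋯+[x_k], equals c'_{λ,k} · s_{(λ_1,...,λ_k)}([x_1]+⋯+[x_k]), where c'_{λ,k} = (N_{λ,k}! / Π_{i=1}^{l−k} w_i!) · Π_{1≤i<j≤l−k}(w_j−w_i). -/

import Mathlib

open MvPolynomial

/-- The polynomial `p_n(t)` defined by `exp(Σ_{n≥1} t_n k^n) = Σ_{n≥0} p_n(t) k^n`,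
as a polynomial in the variables `t_1, t_2, ...` (variable `X n` stands for `t_n`). -/
noncomputable def pS (n : ℕ) : MvPolynomial ℕ ℚ :=
  ∑ m ∈ Finset.range (n + 1), (Nat.factorial m : ℚ)⁻¹ •
    ∑ c ∈ Finset.univ.filter
        (fun c : Fin m → Fin (n + 1) =>
          (∑ j, ((c j : ℕ))) = n ∧ ∀ j, 1 ≤ (c j : ℕ)),
      ∏ j, X ((c j : ℕ))

/-- `p_n` for `n : ℤ`, with `p_n = 0` for `n < 0`. -/
noncomputable def pz (n : ℤ) : MvPolynomial ℕ ℚ :=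
  if 0 ≤ n then pS n.toNat else 0

/-- The Schur function `s_λ(t) = det(p_{λ_i - i + j})_{1 ≤ i,j ≤ l}` (here `0`-indexed). -/
noncomputable def schur {l : ℕ} (lam : Fin l → ℕ) : MvPolynomial ℕ ℚ :=
  Matrix.det (Matrix.of fun a b : Fin l =>
    pz ((lam a : ℤ) - ((a : ℕ) : ℤ) + ((b : ℕ) : ℤ)))

/-- Substitution `t_n ↦ (x_1^n + ⋯ + x_k^n)/n`, i.e. `t = [x_1] + ⋯ + [x_k]`. -/
noncomputable def toPowerSums (k : ℕ) (f : MvPolynomial ℕ ℚ) : MvPolynomial (Fin k) ℚ :=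
  aeval (fun n : ℕ => (n : ℚ)⁻¹ • ∑ i : Fin k, X i ^ n) f

/-- Iterated partial derivative `∂_{i_1} ⋯ ∂_{i_r}` for a list `L = [i_1, ..., i_r]`. -/
noncomputable def derivs (L : List ℕ) (f : MvPolynomial ℕ ℚ) : MvPolynomial ℕ ℚ :=
  L.foldr (fun i g => pderiv i g) f

/-- The entries of a partition `λ` padded by zeros (`0`-indexed). -/
def pad {l : ℕ} (lam : Fin l → ℕ) (a : ℕ) : ℕ := if h : a < l then lam ⟨a, h⟩ else 0

/-!
By Taylor's formula, `∂_1 ^ N f` at `t` is `N!` times the coefficient of `u ^ N` in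
`f(t_1 + u, t_2, …)`. At the point `[x_1] + ⋯ + [x_k] + (u, 0, 0, …)` the generating series of the
`p_n` is `exp(u X) / Π (1 - x_i X)`. Multiplying it by the degree-`k` polynomial `Π (1 - x_i X)` is
a column operation on all but the first `k` columns of the Jacobi–Trudi matrix, after which these
columns consist of the monomials `u ^ z / z!` with `z = λ_i - i + j`. As `λ_i - i` is larger in the
first `k` rows than in the others, the lowest power of `u` in the determinant is `u ^ N_{λ,k}`, and
its coefficient is a product of two diagonal blocks: one is `s_{(λ_1, …, λ_k)}`, the other a
determinant of reciprocal factorials, which is of Vandermonde type.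
-/

section LinearODE

open PowerSeries

theorem eq_of_derivative_eq_mul {S : Type*} [CommRing S] [IsAddTorsionFree S] {a F G : S⟦X⟧}
    (hF : d⁄dX S F = a * F) (hG : d⁄dX S G = a * G)
    (h0 : constantCoeff F = constantCoeff G) : F = G := by
  ext n
  induction n using Nat.strong_induction_on with
  | _ n ih =>
    cases n with
    | zero => simpa using h0
    | succ n =>
      have hmul : coeff n (a * F) = coeff n (a * G) := by
        rw [PowerSeries.coeff_mul, PowerSeries.coeff_mul]
        refine Finset.sum_congr rfl fun p hp => ?_
        rw [ih p.2 (Nat.lt_succ_of_le (Finset.HasAntidiagonal.antidiagonal.snd_le hp))]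
      rw [← hF, ← hG, coeff_derivative, coeff_derivative] at hmul
      refine nsmul_right_injective n.succ_ne_zero ?_
      simpa [nsmul_eq_mul, mul_comm] using hmul

end LinearODE

section GeneratingSeries

open PowerSeries

variable {S : Type*} [CommRing S]

theorem coeff_pow_eq_sum_fin (F : S⟦X⟧) (m n : ℕ) :
    coeff n (F ^ m) = ∑ c : Fin m → Fin (n + 1) with ∑ j, (c j : ℕ) = n,
      ∏ j, coeff (c j : ℕ) F := by
  have hpow : F ^ m = ∏ _j : Fin m, F := by simp
  rw [hpow, coeff_prod]
  have hle (f : Fin m →₀ ℕ) (hf : f ∈ Finset.univ.finsuppAntidiag n) (j : Fin m) :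
      f j < n + 1 := by
    rw [Nat.lt_succ_iff, ← (Finset.mem_finsuppAntidiag.1 hf).1]
    exact Finset.single_le_sum (fun _ _ => Nat.zero_le _) (Finset.mem_univ j)
  symm
  refine Finset.sum_bij' (fun c _ => Finsupp.equivFunOnFinite.symm fun j => (c j : ℕ))
    (fun f hf j => ⟨f j, hle f hf j⟩) ?_ ?_ ?_ ?_ ?_
  · intro c hc
    simpa using hc
  · intro f hf
    simpa using (Finset.mem_finsuppAntidiag.1 hf).1
  all_goals intros; try ext
  all_goals simp

variable [Algebra ℚ S]

/-- The generating series `Σ p_n(t) X^n` at a point `t` of a `ℚ`-algebra. The value `t 0` plays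
no role, since `p_n` does not involve the variable `X 0`. -/
noncomputable def pSeries (t : ℕ → S) : S⟦X⟧ :=
  PowerSeries.mk fun n => aeval t (pS n)

theorem pSeries_eq_exp_subst (t : ℕ → S) :
    pSeries t = (exp S).subst (PowerSeries.X * PowerSeries.mk fun n => t (n + 1)) := by
  set T : S⟦X⟧ := PowerSeries.X * PowerSeries.mk fun n => t (n + 1) with hT
  have hT0 : constantCoeff T = 0 := by simp [hT]
  have hcoeff (n : ℕ) (hn : 1 ≤ n) : coeff n T = t n := by
    obtain ⟨n, rfl⟩ := Nat.exists_eq_add_of_le' hn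
    rw [hT, coeff_succ_X_mul, coeff_mk]
  ext n
  rw [pSeries, coeff_mk, coeff_subst' (HasSubst.of_constantCoeff_zero' hT0),
    finsum_eq_sum_of_support_subset (s := Finset.range (n + 1)), pS, map_sum]
  · refine Finset.sum_congr rfl fun m _ => ?_
    rw [map_smul, map_sum, coeff_pow_eq_sum_fin, coeff_exp, algebraMap_smul, one_div,
      ← Finset.filter_filter, Finset.sum_filter]
    congr 1
    refine Finset.sum_congr rfl fun c _ => ?_
    split_ifs with hc
    · rw [map_prod]
      exact Finset.prod_congr rfl fun j _ => by rw [aeval_X, hcoeff _ (hc j)]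
    · push Not at hc
      obtain ⟨j, hj⟩ := hc
      refine (Finset.prod_eq_zero (Finset.mem_univ j) ?_).symm
      rw [Nat.lt_one_iff.1 hj, coeff_zero_eq_constantCoeff_apply, hT0]
  · intro m hm
    by_contra hlt
    have hnm : n < m := by simpa using hlt
    refine hm ?_
    simp only
    rw [coeff_of_lt_order n ((Nat.cast_lt.2 hnm).trans_le
      (le_order_pow_of_constantCoeff_eq_zero m hT0)), smul_zero]

theorem constantCoeff_pSeries (t : ℕ → S) : constantCoeff (pSeries t) = 1 := by
  rw [← coeff_zero_eq_constantCoeff_apply, pSeries, coeff_mk]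
  simp [pS]

theorem derivative_pSeries (t : ℕ → S) :
    d⁄dX S (pSeries t) = (PowerSeries.mk fun n => ((n : S) + 1) * t (n + 1)) * pSeries t := by
  rw [pSeries_eq_exp_subst, derivative_subst (HasSubst.of_constantCoeff_zero' (by simp)),
    derivative_exp, mul_comm]
  congr 1
  ext n
  rw [coeff_derivative, coeff_succ_X_mul, coeff_mk, coeff_mk, mul_comm]

attribute [local instance] IsAddTorsionFree.of_module_rat

theorem pSeries_add (s t : ℕ → S) : pSeries (s + t) = pSeries s * pSeries t := by
  refine eq_of_derivative_eq_mul (derivative_pSeries _) ?_ (by simp [constantCoeff_pSeries])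
  have hadd : (PowerSeries.mk fun n => ((n : S) + 1) * (s + t) (n + 1)) =
      (PowerSeries.mk fun n => ((n : S) + 1) * s (n + 1)) +
        PowerSeries.mk fun n => ((n : S) + 1) * t (n + 1) := by
    ext n
    simp [mul_add]
  rw [hadd, Derivation.leibniz, derivative_pSeries, derivative_pSeries, smul_eq_mul, smul_eq_mul]
  ring

theorem pSeries_single_one (u : S) : pSeries (Pi.single 1 u) = rescale u (exp S) := by
  have hC : (PowerSeries.mk fun n => ((n : S) + 1) * Pi.single (M := fun _ => S) 1 u (n + 1)) =
      PowerSeries.C u := by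
    ext n
    cases n <;> simp [PowerSeries.coeff_C, Pi.single_apply]
  refine eq_of_derivative_eq_mul (a := PowerSeries.C u) ?_ ?_ ?_
  · rw [derivative_pSeries, hC]
  · ext n
    have hexp := congrArg (coeff n) (derivative_exp S)
    rw [coeff_derivative] at hexp
    rw [coeff_derivative, coeff_rescale, PowerSeries.coeff_C_mul, coeff_rescale, ← hexp]
    ring
  · rw [constantCoeff_pSeries, ← coeff_zero_eq_constantCoeff_apply, coeff_rescale]
    simp

theorem pSeries_zero : pSeries (0 : ℕ → S) = 1 := by
  simpa using pSeries_single_one (0 : S)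

/-- The point `[x] = (x, x²/2, x³/3, …)`; its value at `0` is `0⁻¹ • 1 = 0`. -/
noncomputable def miwaPoint (x : S) : ℕ → S := fun n => (n : ℚ)⁻¹ • x ^ n

theorem one_sub_mul_pSeries_miwaPoint (x : S) :
    (1 - PowerSeries.C x * PowerSeries.X) * pSeries (miwaPoint x) = 1 := by
  have hlog : (PowerSeries.mk fun n => ((n : S) + 1) * miwaPoint x (n + 1)) =
      PowerSeries.mk fun n => x ^ (n + 1) := by
    ext n
    rw [coeff_mk, coeff_mk, miwaPoint, mul_smul_comm, ← Nat.cast_succ, ← nsmul_eq_mul,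
      ← Nat.cast_smul_eq_nsmul ℚ, smul_smul, inv_mul_cancel₀ (by positivity), one_smul]
  have hgeom : (1 - PowerSeries.C x * PowerSeries.X) * (PowerSeries.mk fun n => x ^ (n + 1)) =
      PowerSeries.C x := by
    ext n
    cases n <;> simp [sub_mul, mul_assoc, coeff_succ_X_mul, PowerSeries.coeff_C, pow_succ']
  refine derivative.ext ?_ (by simp [constantCoeff_pSeries])
  simp only [Derivation.leibniz, derivative_pSeries, hlog, smul_eq_mul, map_sub, derivative_one,
    derivative_X, derivative_C]
  linear_combination pSeries (miwaPoint x) * hgeom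

theorem prod_one_sub_mul_pSeries_sum_miwaPoint {ι : Type*} (x : ι → S) (s : Finset ι) :
    (∏ i ∈ s, (1 - PowerSeries.C (x i) * PowerSeries.X)) *
      pSeries (∑ i ∈ s, miwaPoint (x i)) = 1 := by
  classical
  induction s using Finset.induction_on with
  | empty => simp [pSeries_zero]
  | insert i s hi ih =>
    rw [Finset.prod_insert hi, Finset.sum_insert hi, pSeries_add, mul_mul_mul_comm, ih,
      one_sub_mul_pSeries_miwaPoint, one_mul]

end GeneratingSeries

section ColumnOperations

open scoped Polynomial LaurentSeries PowerSeries
open HahnSeries (ofPowerSeries)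

/-- The reciprocal factorial `1 / z!`, extended by zero to negative integers `z`. -/
noncomputable def invFactorial (z : ℤ) : ℚ :=
  if 0 ≤ z then (z.toNat.factorial : ℚ)⁻¹ else 0

theorem invFactorial_of_neg {z : ℤ} (hz : z < 0) : invFactorial z = 0 :=
  if_neg hz.not_ge

variable {S : Type*} [CommRing S]

theorem coeff_ofPowerSeries_coe_mul (E : S[X]) (F : S⸨X⸩) (b : ℕ) (hE : E.natDegree ≤ b) (z : ℤ) :
    (ofPowerSeries ℤ S E * F).coeff (z + b) =
      ∑ j ∈ Finset.range (b + 1), F.coeff (z + j) * E.coeff (b - j) := by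
  have hsum : ofPowerSeries ℤ S E =
      ∑ j ∈ Finset.range (b + 1), HahnSeries.single (j : ℤ) (E.coeff j) := by
    conv_lhs => rw [E.as_sum_range_C_mul_X_pow' (Nat.lt_succ_of_le hE)]
    rw [← Polynomial.coeToPowerSeries.ringHom_apply, map_sum, map_sum]
    simp [HahnSeries.C_apply, HahnSeries.ofPowerSeries_X_pow, HahnSeries.single_mul_single]
  rw [hsum, Finset.sum_mul, HahnSeries.coeff_sum, ← Finset.sum_range_reflect]
  refine Finset.sum_congr rfl fun j hj => ?_
  have hjb : j ≤ b := Nat.lt_succ_iff.1 (Finset.mem_range.1 hj)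
  rw [HahnSeries.coeff_single_mul, mul_comm]
  congr 2
  omega

/-- Multiplying by the unitriangular Toeplitz matrix of `E` on the right is a column operation;
the bound on the degree keeps it from reaching past the first column. -/
theorem det_coeff_eq_det_coeff_mul {k l : ℕ} (E : S[X]) (hdeg : E.natDegree ≤ k)
    (hE0 : E.coeff 0 = 1) (F : S⸨X⸩) (μ : Fin l → ℤ) :
    (Matrix.of fun a b : Fin l => F.coeff (μ a + (b : ℕ))).det =
      (Matrix.of fun a b : Fin l => if k ≤ (b : ℕ)
        then (ofPowerSeries ℤ S E * F).coeff (μ a + (b : ℕ)) else F.coeff (μ a + (b : ℕ))).det := by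
  let U : Matrix (Fin l) (Fin l) S := Matrix.of fun j b =>
    if k ≤ (b : ℕ) then (if j ≤ b then E.coeff (b - j) else 0) else if j = b then 1 else 0
  have hU : U.det = 1 := by
    rw [Matrix.det_of_isUpperTriangular]
    · exact Finset.prod_eq_one fun b _ => by simp [U, hE0]
    · intro j b (hbj : b < j)
      simp [U, hbj.not_ge, hbj.ne']
  rw [← mul_one (Matrix.det _), ← hU, ← Matrix.det_mul]
  congr 1
  ext a b
  simp only [Matrix.mul_apply, Matrix.of_apply, U, Fin.le_def]
  split_ifs with hb
  · rw [coeff_ofPowerSeries_coe_mul E F b (hdeg.trans hb),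
      Fin.sum_univ_eq_sum_range (fun j => F.coeff (μ a + j) *
        if j ≤ (b : ℕ) then E.coeff (b - j) else 0) l,
      ← Finset.sum_subset (Finset.range_subset_range.2 b.is_lt)]
    · refine Finset.sum_congr rfl fun j hj => ?_
      rw [if_pos (Nat.lt_succ_iff.1 (Finset.mem_range.1 hj))]
    · intro j _ hj
      rw [if_neg fun h => hj (Finset.mem_range.2 (Nat.lt_succ_of_le h)), mul_zero]
  · simp

variable [Algebra ℚ S]

theorem coeff_ofPowerSeries_rescale_exp (u : S) (z : ℤ) :
    (ofPowerSeries ℤ S (PowerSeries.rescale u (PowerSeries.exp S))).coeff z =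
      algebraMap ℚ S (invFactorial z) * u ^ z.toNat := by
  rw [PowerSeries.coeff_coe]
  split_ifs with hz
  · rw [invFactorial_of_neg hz, map_zero, zero_mul]
  · rw [PowerSeries.coeff_rescale, PowerSeries.coeff_exp, invFactorial, if_pos (not_lt.1 hz),
      mul_comm, one_div, show z.natAbs = z.toNat by omega]

theorem aeval_pz (t : ℕ → S) (z : ℤ) :
    aeval t (pz z) = (ofPowerSeries ℤ S (pSeries t)).coeff z := by
  rw [PowerSeries.coeff_coe, pz]
  split_ifs with h h' h'
  · omega
  · rw [pSeries, PowerSeries.coeff_mk]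
    congr
    omega
  · exact map_zero _
  · omega

theorem aeval_schur (t : ℕ → S) {l : ℕ} (lam : Fin l → ℕ) :
    aeval t (schur lam) = (Matrix.of fun a b : Fin l =>
      (ofPowerSeries ℤ S (pSeries t)).coeff ((lam a : ℤ) - (a : ℕ) + (b : ℕ))).det := by
  rw [schur, AlgHom.map_det]
  congr 1
  ext a b
  exact aeval_pz t _

/-- The factor `Π (1 - x_i X)` cancels the contribution of the `x_i` to the generating series,
leaving `exp (u X)`. -/
theorem aeval_schur_sum_miwaPoint_add_single {k l : ℕ} (x : Fin k → S) (u : S)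
    (lam : Fin l → ℕ) (t : ℕ → S) (ht : t = ∑ i, miwaPoint (x i) + Pi.single 1 u) :
    aeval t (schur lam) = (Matrix.of fun a b : Fin l => if k ≤ (b : ℕ)
      then algebraMap ℚ S (invFactorial ((lam a : ℤ) - (a : ℕ) + (b : ℕ))) *
        u ^ ((lam a : ℤ) - (a : ℕ) + (b : ℕ)).toNat
      else aeval t (pz ((lam a : ℤ) - (a : ℕ) + (b : ℕ)))).det := by
  set E : S[X] := ∏ i, (1 - Polynomial.C (x i) * Polynomial.X) with hE
  have hdeg : E.natDegree ≤ k := by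
    refine (Polynomial.natDegree_prod_le _ _).trans
      ((Finset.sum_le_card_nsmul _ _ 1 fun i _ => ?_).trans (by simp))
    compute_degree
  have hE0 : E.coeff 0 = 1 := by simp [hE, Polynomial.coeff_zero_prod]
  have hcoe : (E : S⟦X⟧) = ∏ i, (1 - PowerSeries.C (x i) * PowerSeries.X) := by
    rw [hE, ← Polynomial.coeToPowerSeries.ringHom_apply, map_prod]
    simp
  have hexp : ofPowerSeries ℤ S E * ofPowerSeries ℤ S (pSeries t) =
      ofPowerSeries ℤ S (PowerSeries.rescale u (PowerSeries.exp S)) := by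
    rw [← map_mul, ht, pSeries_add, ← mul_assoc, hcoe, prod_one_sub_mul_pSeries_sum_miwaPoint,
      one_mul, pSeries_single_one]
  rw [aeval_schur, det_coeff_eq_det_coeff_mul E hdeg hE0, hexp]
  simp only [coeff_ofPowerSeries_rescale_exp, aeval_pz]

end ColumnOperations

section LowestCoefficient

open scoped Polynomial

variable {R : Type*} [CommRing R]

theorem prod_mul_det_eq_prod_mul_det {n : Type*} [Fintype n] [DecidableEq n]
    {M M' : Matrix n n R} {r c : n → R} (h : ∀ i j, c j * M i j = r i * M' i j) :
    (∏ j, c j) * M.det = (∏ i, r i) * M'.det := by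
  rw [← Matrix.det_mul_row, ← Matrix.det_mul_column]
  congr 1
  ext i j
  exact h i j

variable {m n : Type*} [Fintype m] [Fintype n] [DecidableEq m] [DecidableEq n]

theorem coeff_zero_det_fromBlocks (A : Matrix m m R[X]) (B : Matrix m n R[X])
    {C : Matrix n m R[X]} (D : Matrix n n R[X]) (hC : ∀ i j, (C i j).coeff 0 = 0) :
    (Matrix.fromBlocks A B C D).det.coeff 0 =
      (A.map fun p => p.coeff 0).det * (D.map fun p => p.coeff 0).det := by
  have hC' : C.map Polynomial.constantCoeff = 0 := by
    ext i j
    exact hC i j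
  rw [← Polynomial.constantCoeff_apply, RingHom.map_det, RingHom.mapMatrix_apply,
    Matrix.fromBlocks_map, hC', Matrix.det_fromBlocks_zero₂₁]
  rfl

/-- Rescaling rows and columns by powers of `X` turns the matrix into a polynomial matrix which is
block triangular at `X = 0`. -/
theorem coeff_det_of_monomial_columns (M : Matrix (m ⊕ n) (m ⊕ n) R[X])
    (d : Matrix (m ⊕ n) n R) (e : m ⊕ n → ℕ) (f : n → ℕ)
    (hM : ∀ i b, Polynomial.X ^ f b * M i (.inr b) = Polynomial.C (d i b) * Polynomial.X ^ e i)
    (he : ∀ a b, e (.inr b) < e (.inl a)) (N : ℕ)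
    (hN : N + ∑ b, f b = ∑ b, e (.inr b)) :
    M.det.coeff N = (M.toBlocks₁₁.map fun p => p.coeff 0).det * (d.submatrix Sum.inr id).det := by
  obtain ⟨θ, hinl, hinr⟩ : ∃ θ, (∀ a, θ ≤ e (.inl a)) ∧ ∀ b, e (.inr b) < θ :=
    ⟨Finset.univ.sup fun b => e (.inr b) + 1, fun a => Finset.sup_le fun b _ => he a b,
      fun b => Finset.le_sup (f := fun b => e (.inr b) + 1) (Finset.mem_univ b)⟩
  let B : Matrix m n R[X] := Matrix.of fun a b =>
    Polynomial.C (d (.inl a) b) * Polynomial.X ^ (e (.inl a) - θ)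
  let C : Matrix n m R[X] := Matrix.of fun a b =>
    M (.inr a) (.inl b) * Polynomial.X ^ (θ - e (.inr a))
  let D : Matrix n n R[X] := Matrix.of fun a b => Polynomial.C (d (.inr a) b)
  let r : m ⊕ n → R[X] := Sum.elim (fun _ => Polynomial.X ^ θ) fun a => Polynomial.X ^ e (.inr a)
  let c : m ⊕ n → R[X] := Sum.elim (fun _ => Polynomial.X ^ θ) fun b => Polynomial.X ^ f b
  have hscale : ∀ i j, c j * M i j = r i * Matrix.fromBlocks M.toBlocks₁₁ B C D i j := by
    rintro (a | a) (b | b)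
    · rfl
    · simp only [c, r, B, Sum.elim_inl, Sum.elim_inr, Matrix.fromBlocks_apply₁₂, Matrix.of_apply,
        hM]
      rw [mul_left_comm, ← pow_add, Nat.add_sub_cancel' (hinl a)]
    · simp only [c, r, C, Sum.elim_inl, Sum.elim_inr, Matrix.fromBlocks_apply₂₁, Matrix.of_apply]
      rw [mul_left_comm, ← pow_add, Nat.add_sub_cancel' (hinr a).le, mul_comm]
    · exact (hM (.inr a) b).trans (mul_comm _ _)
  have hdet : M.det = Polynomial.X ^ N * (Matrix.fromBlocks M.toBlocks₁₁ B C D).det := by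
    have h := prod_mul_det_eq_prod_mul_det hscale
    simp only [c, r, Fintype.prod_sum_type, Sum.elim_inl, Sum.elim_inr,
      Finset.prod_pow_eq_pow_sum, ← hN, ← pow_add] at h
    rw [← add_assoc, add_right_comm, pow_add _ _ N, mul_assoc] at h
    exact (Polynomial.monic_X_pow _).isRegular.left h
  have hC (a : n) (b : m) : (C a b).coeff 0 = 0 := by
    simp only [C, Matrix.of_apply]
    rw [Polynomial.coeff_mul_X_pow', if_neg (Nat.sub_pos_of_lt (hinr a)).not_ge]
  have hD : (D.map fun p => p.coeff 0) = d.submatrix Sum.inr id := by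
    ext a b
    exact Polynomial.coeff_C_zero
  rw [hdet, Polynomial.coeff_X_pow_mul', if_pos le_rfl, Nat.sub_self,
    coeff_zero_det_fromBlocks _ _ _ hC, hD]

end LowestCoefficient

section Taylor

open scoped Polynomial

variable {R : Type*} [CommRing R] [Algebra ℚ R]

/-- The point `(τ_1 + X, τ_2, τ_3, …)` over `R[X]`, at which polynomials in the `t_n` are expanded
around `τ` in the direction `t_1`. -/
noncomputable def translatedPoint (τ : ℕ → R) : ℕ → R[X] :=
  (fun n => Polynomial.C (τ n)) + Pi.single 1 (Polynomial.X : R[X])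

theorem coeff_zero_aeval_translatedPoint (τ : ℕ → R) (f : MvPolynomial ℕ ℚ) :
    (aeval (translatedPoint τ) f).coeff 0 = aeval τ f := by
  have h : (fun n => Polynomial.aeval (0 : R) (translatedPoint τ n)) = τ := by
    ext n
    by_cases hn : n = 1 <;> simp [translatedPoint, hn]
  rw [Polynomial.coeff_zero_eq_aeval_zero, ← AlgHom.restrictScalars_apply ℚ,
    comp_aeval_apply]
  exact congrArg (aeval · f) h

theorem derivative_aeval_translatedPoint (τ : ℕ → R) (f : MvPolynomial ℕ ℚ) :
    Polynomial.derivative (aeval (translatedPoint τ) f) =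
      aeval (translatedPoint τ) (pderiv 1 f) := by
  induction f using MvPolynomial.induction_on with
  | C q =>
    rw [pderiv_C, map_zero, aeval_C, IsScalarTower.algebraMap_apply ℚ R R[X]]
    exact Polynomial.derivative_C
  | add p q hp hq => simp only [map_add, hp, hq]
  | mul_X p n hp =>
    have hX : Polynomial.derivative (translatedPoint τ n) =
        Pi.single (M := fun _ => R[X]) 1 1 n := by
      by_cases hn : n = 1 <;> simp [translatedPoint, hn]
    rw [map_mul, Polynomial.derivative_mul, hp, Derivation.leibniz, aeval_X, pderiv_X, hX]
    by_cases hn : n = 1 <;> simp [hn] <;> ring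

theorem iterate_derivative_aeval_translatedPoint (τ : ℕ → R) (N : ℕ) (f : MvPolynomial ℕ ℚ) :
    Polynomial.derivative^[N] (aeval (translatedPoint τ) f) =
      aeval (translatedPoint τ) (derivs (List.replicate N 1) f) := by
  induction N with
  | zero => rfl
  | succ N ih =>
    rw [Function.iterate_succ_apply', ih, derivative_aeval_translatedPoint]
    rfl

theorem aeval_derivs_replicate_one (τ : ℕ → R) (N : ℕ) (f : MvPolynomial ℕ ℚ) :
    aeval τ (derivs (List.replicate N 1) f) =
      N.factorial * (aeval (translatedPoint τ) f).coeff N := by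
  rw [← coeff_zero_aeval_translatedPoint, ← iterate_derivative_aeval_translatedPoint,
    Polynomial.coeff_iterate_derivative, zero_add, Nat.descFactorial_self, nsmul_eq_mul]

end Taylor

section InvFactorial

theorem invFactorial_sub (n j : ℕ) :
    invFactorial ((n : ℤ) - j) = (n.factorial : ℚ)⁻¹ * (n.descFactorial j : ℚ) := by
  rcases le_or_gt j n with hj | hj
  · have hne : ((n - j).factorial : ℚ) ≠ 0 := by positivity
    rw [← Nat.cast_sub hj, invFactorial, if_pos (Int.natCast_nonneg _), Int.toNat_natCast,
      eq_inv_mul_iff_mul_eq₀ (by positivity), ← Nat.factorial_mul_descFactorial hj]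
    push_cast
    field_simp
  · rw [invFactorial_of_neg (by omega), Nat.descFactorial_eq_zero_iff_lt.2 hj, Nat.cast_zero,
      mul_zero]

/-- Up to the row factors `1 / v_i!` this is a Vandermonde determinant in the basis of falling
factorials. -/
theorem det_invFactorial_sub (v : ℕ → ℕ) (m : ℕ) :
    (Matrix.of fun i j : Fin m => invFactorial ((v i : ℤ) - (j : ℕ))).det =
      (∏ i ∈ Finset.range m, ((v i).factorial : ℚ))⁻¹ *
        ∏ j ∈ Finset.range m, ∏ i ∈ Finset.range j, ((v j : ℚ) - v i) := by
  have hfall : (Matrix.of fun i j : Fin m => invFactorial ((v i : ℤ) - (j : ℕ))) =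
      Matrix.of fun i j : Fin m => ((v i).factorial : ℚ)⁻¹ *
        (Matrix.of fun i j : Fin m => (descPochhammer ℚ j).eval (v i : ℚ)) i j := by
    ext i j
    simp only [Matrix.of_apply, invFactorial_sub, descPochhammer_eval_eq_descFactorial]
  have hIio (j : Fin m) : ∏ i ∈ Finset.Iio j, ((v j : ℚ) - v i) =
      ∏ i ∈ Finset.range j, ((v j : ℚ) - v i) := by
    rw [← Nat.Iio_eq_range, ← Fin.map_valEmbedding_Iio, Finset.prod_map]
    rfl
  rw [hfall, Matrix.det_mul_column, ← Matrix.det_eval_matrixOfPolynomials_eq_det_vandermonde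
    (fun i : Fin m => (v i : ℚ)) (fun j => descPochhammer ℚ j)
    (fun j => descPochhammer_natDegree ℚ j) (fun j => monic_descPochhammer ℚ j),
    Matrix.det_vandermonde, Finset.prod_inv_distrib,
    Fin.prod_univ_eq_prod_range fun i => ((v i).factorial : ℚ),
    ← Fin.prod_univ_eq_prod_range fun j => ∏ i ∈ Finset.range j, ((v j : ℚ) - v i)]
  simp only [← hIio]
  congr 1
  exact Finset.prod_comm' (by simp)

end InvFactorial

section Schur

open scoped Polynomial

variable {R : Type*} [CommRing R] [Algebra ℚ R]

theorem translatedPoint_sum_miwaPoint {k : ℕ} (x : Fin k → R) :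
    translatedPoint (∑ i, miwaPoint (x i)) =
      ∑ i, miwaPoint (Polynomial.C (x i)) + Pi.single 1 (Polynomial.X : R[X]) := by
  ext1 n
  simp [translatedPoint, miwaPoint, Finset.sum_apply, ← Polynomial.smul_C]

theorem X_pow_mul_invFactorial_mul_X_pow {z : ℤ} {e f : ℕ} (h : (e : ℤ) = z + f) :
    (Polynomial.X ^ f * (algebraMap ℚ R[X] (invFactorial z) * Polynomial.X ^ z.toNat) : R[X]) =
      Polynomial.C (algebraMap ℚ R (invFactorial z)) * Polynomial.X ^ e := by
  rw [IsScalarTower.algebraMap_apply ℚ R R[X], Polynomial.algebraMap_eq, mul_left_comm, ← pow_add]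
  rcases lt_or_ge z 0 with hz | hz
  · simp [invFactorial_of_neg hz]
  · rw [show f + z.toNat = e by omega]

theorem coeff_aeval_translatedPoint_schur {k m : ℕ} (x : Fin k → R) (lam : Fin (k + m) → ℕ)
    (hsep : ∀ (a : Fin k) (b : Fin m), lam (.natAdd k b) + a < lam (.castAdd m a) + (k + b)) :
    (aeval (translatedPoint (∑ i, miwaPoint (x i))) (schur lam)).coeff (∑ b, lam (.natAdd k b)) =
      aeval (∑ i, miwaPoint (x i)) (schur fun a => lam (.castAdd m a)) *
        algebraMap ℚ R (Matrix.of fun a b : Fin m =>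
          invFactorial ((lam (.natAdd k a) : ℤ) - (a : ℕ) + (b : ℕ))).det := by
  rw [aeval_schur_sum_miwaPoint_add_single (fun i => Polynomial.C (x i)) Polynomial.X lam _
      (translatedPoint_sum_miwaPoint x), ← Matrix.det_submatrix_equiv_self finSumFinEquiv,
    coeff_det_of_monomial_columns _
      (Matrix.of fun i (b : Fin m) => algebraMap ℚ R (invFactorial
        ((lam (finSumFinEquiv i) : ℤ) - (finSumFinEquiv i : ℕ) + (k + b : ℕ))))
      (fun i => lam (finSumFinEquiv i) + (k + m - finSumFinEquiv i)) (fun b => m - b)]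
  · congr 1
    · rw [schur, AlgHom.map_det]
      congr 1
      ext a b
      simp only [Matrix.map_apply, Matrix.toBlocks₁₁, Matrix.of_apply, Matrix.submatrix_apply,
        finSumFinEquiv_apply_left, Fin.val_castAdd, b.is_lt.not_ge, if_false,
        coeff_zero_aeval_translatedPoint]
      rfl
    · rw [RingHom.map_det]
      congr 1
      ext a b
      simp only [Matrix.submatrix_apply, Matrix.of_apply, RingHom.mapMatrix_apply,
        Matrix.map_apply, finSumFinEquiv_apply_right, id_eq, Fin.val_natAdd]
      congr 2
      push_cast
      ring
  · intro i b
    simp only [Matrix.submatrix_apply, Matrix.of_apply, finSumFinEquiv_apply_right,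
      Fin.val_natAdd, Nat.le_add_right, if_true]
    exact X_pow_mul_invFactorial_mul_X_pow (by omega)
  · intro a b
    have := hsep a b
    simp only [finSumFinEquiv_apply_left, finSumFinEquiv_apply_right, Fin.val_natAdd,
      Fin.val_castAdd]
    omega
  · simp only [finSumFinEquiv_apply_right, Fin.val_natAdd, Nat.add_sub_add_left,
      Finset.sum_add_distrib]

end Schur

section Padding

variable {k m : ℕ} (lam : Fin (k + m) → ℕ)

theorem pad_castAdd (a : Fin k) : pad lam a = lam (.castAdd m a) :=
  dif_pos (Fin.castAdd m a).is_lt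

theorem pad_add (b : Fin m) : pad lam (k + b) = lam (.natAdd k b) :=
  dif_pos (Fin.natAdd k b).is_lt

theorem sum_Ico_pad : ∑ a ∈ Finset.Ico k (k + m), pad lam a = ∑ b, lam (.natAdd k b) := by
  rw [Finset.sum_Ico_eq_sum_range, Nat.add_sub_cancel_left,
    ← Fin.sum_univ_eq_sum_range fun b => pad lam (k + b)]
  simp only [pad_add]

theorem det_invFactorial_tail :
    (Matrix.of fun a b : Fin m =>
      invFactorial ((lam (.natAdd k a) : ℤ) - (a : ℕ) + (b : ℕ))).det =
      (∏ i ∈ Finset.range m, ((pad lam (k + m - 1 - i) + i).factorial : ℚ))⁻¹ *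
        ∏ j ∈ Finset.range m, ∏ i ∈ Finset.range j,
          (((pad lam (k + m - 1 - j) + j : ℕ) : ℚ) - (pad lam (k + m - 1 - i) + i : ℕ)) := by
  rw [← det_invFactorial_sub (fun i => pad lam (k + m - 1 - i) + i) m,
    ← Matrix.det_submatrix_equiv_self Fin.revPerm]
  congr 1
  ext a b
  have ha : k + m - 1 - a = k + (a.rev : ℕ) := by rw [Fin.val_rev]; omega
  simp only [Matrix.submatrix_apply, Matrix.of_apply, Fin.revPerm_apply, ha, pad_add]
  rw [Fin.val_rev, Fin.val_rev]
  congr 1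
  omega

end Padding

theorem toPowerSums_eq_aeval (k : ℕ) (f : MvPolynomial ℕ ℚ) :
    toPowerSums k f = aeval (∑ i : Fin k, miwaPoint (X i : MvPolynomial (Fin k) ℚ)) f := by
  rw [toPowerSums]
  congr 2
  ext1 n
  rw [Finset.sum_apply, Finset.smul_sum]
  rfl

theorem statement10_general (l : ℕ) (lam : Fin l → ℕ) (k : ℕ) (hk : k ≤ l)
    (hsep : ∀ a b : Fin l, (a : ℕ) < k → k ≤ (b : ℕ) → lam b + a < lam a + b)
    (N : ℕ) (hN : N = ∑ a ∈ Finset.Ico k l, pad lam a)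
    (c : ℚ)
    (hc : c = (Nat.factorial N : ℚ)
          / (∏ i ∈ Finset.range (l - k), (Nat.factorial (pad lam (l - 1 - i) + i) : ℚ))
        * ∏ j ∈ Finset.range (l - k), ∏ i ∈ Finset.range j,
            (((pad lam (l - 1 - j) + j : ℕ) : ℚ) - ((pad lam (l - 1 - i) + i : ℕ) : ℚ))) :
    toPowerSums k (derivs (List.replicate N 1) (schur lam))
      = c • toPowerSums k (schur (fun a : Fin k => pad lam a)) := by
  obtain ⟨m, rfl⟩ := Nat.exists_eq_add_of_le hk
  have hsep' (a : Fin k) (b : Fin m) :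
      lam (.natAdd k b) + a < lam (.castAdd m a) + (k + b) :=
    hsep (.castAdd m a) (.natAdd k b) a.is_lt (Nat.le_add_right k b)
  have hc' : c = N.factorial * (Matrix.of fun a b : Fin m =>
      invFactorial ((lam (.natAdd k a) : ℤ) - (a : ℕ) + (b : ℕ))).det := by
    rw [hc, Nat.add_sub_cancel_left, det_invFactorial_tail, div_eq_mul_inv, mul_assoc]
  rw [sum_Ico_pad] at hN
  simp only [pad_castAdd]
  rw [toPowerSums_eq_aeval, toPowerSums_eq_aeval, aeval_derivs_replicate_one]
  conv_lhs => rw [hN, coeff_aeval_translatedPoint_schur _ lam hsep', ← hN]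
  rw [hc', Algebra.smul_def, map_mul, map_natCast]
  ring

/-- Let `λ = (λ_1,...,λ_l)` be a partition,
`(w_l, ..., w_1) = (λ_1,...,λ_l) + (l-1,...,1,0)` (so `w_{i+1} = λ_{l-i} + i`, 0-indexed `i`,
i.e. `w_{i+1} = pad lam (l-1-i) + i`), and `0 ≤ k ≤ l`. Then
`∂_1^{N_{λ,k}} s_λ` evaluated at `t = [x_1]+⋯+[x_k]` equals
`c'_{λ,k} · s_{(λ_1,...,λ_k)}([x_1]+⋯+[x_k])`, where
`c'_{λ,k} = (N_{λ,k}! / Π_{i=1}^{l-k} w_i!) · Π_{1≤i<j≤l-k} (w_j - w_i)`. -/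
theorem statement10 (l : ℕ) (lam : Fin l → ℕ) (hanti : Antitone lam)
    (k : ℕ) (hk : k ≤ l)
    (N : ℕ) (hN : N = ∑ a ∈ Finset.Ico k l, pad lam a)
    (c : ℚ)
    (hc : c = (Nat.factorial N : ℚ)
          / (∏ i ∈ Finset.range (l - k), (Nat.factorial (pad lam (l - 1 - i) + i) : ℚ))
        * ∏ j ∈ Finset.range (l - k), ∏ i ∈ Finset.range j,
            (((pad lam (l - 1 - j) + j : ℕ) : ℚ) - ((pad lam (l - 1 - i) + i : ℕ) : ℚ))) :
    toPowerSums k (derivs (List.replicate N 1) (schur lam))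
      = c • toPowerSums k (schur (fun a : Fin k => pad lam a)) := by
  refine statement10_general l lam k hk (fun a b ha hb => ?_) N hN c hc
  have hab : lam b ≤ lam a := hanti (Fin.le_def.2 (ha.le.trans hb))
  omega
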